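/- Soundness of elaboration with respect to exact application (main theorem): if the bidirectional elaboration judgment synthesizes, from a concrete term M in context Γ, a core term u together with a type A (judgment Γ ⊢ M ⇒ u : A), or checks a concrete term M against a core type A producing a core term u (judgment Γ ⊢ M : A ⇐ u), and all types stored in Γ, all parameter telescopes and return types of the function symbols in Γ, and (in the checking case) the type A are exactly-applied, then the output core term u is exactly-applied. -/

import Mathlib

/-!
The output term of an elaboration is built only from variables, `lam`, `genLam (fn f (vars Δ_f)) Δ_f`
and the smart application; no type ever occurs inside it, since `lam` carries no annotation.
Variables and `lam` obviously preserve exact application. The only `fn` node introduced is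
`fn f (vars Δ_f)`, which has `|Δ_f| = arity f` arguments (`ExactlyApplied.genLam_fn`). The smart
application may contract a β-redex, so it remains to see that exact application is stable under
substitution (`ExactlyApplied.subst`): substitution replaces arguments one by one and therefore
never changes the number of arguments of an `fn` node. A simultaneous induction on the two
judgments concludes; its invariant, that telescope lengths match the arities, concerns only
`Γ.params`, so it survives the extension of the local context in the `lam` rule.
-/

/-- Core terms of the language, parameterized by a type `F` of function symbols. -/
inductive Tm (F : Type) : Type
  | fn : F → List (Tm F) → Tm F          -- exactly-applied function `fn f ūs`
  | var : String → Tm F                  -- reference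
  | app : Tm F → Tm F → Tm F             -- binary application
  | pi : String → Tm F → Tm F → Tm F     -- `pi A (x. B)`
  | lam : String → Tm F → Tm F           -- `lam (x. u)`

/-- Concrete syntax. -/
inductive Expr (F : Type) : Type
  | fref : F → Expr F                    -- function reference
  | lref : String → Expr F               -- local reference
  | capp : Expr F → Expr F → Expr F      -- application
  | clam : String → Expr F → Expr F      -- lambda abstraction

/-- A core term is exactly-applied when every `fn f ūs` node has
`ūs.length = arity f`. -/
inductive ExactlyApplied {F : Type} (arity : F → ℕ) : Tm F → Prop
  | fn {f us} : us.length = arity f →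
      (∀ u ∈ us, ExactlyApplied arity u) → ExactlyApplied arity (.fn f us)
  | var {x} : ExactlyApplied arity (.var x)
  | app {u v} : ExactlyApplied arity u → ExactlyApplied arity v →
      ExactlyApplied arity (.app u v)
  | pi {x A B} : ExactlyApplied arity A → ExactlyApplied arity B →
      ExactlyApplied arity (.pi x A B)
  | lam {x u} : ExactlyApplied arity u → ExactlyApplied arity (.lam x u)

/-- Substitution of a substitution object `σ` into a core term.
`u[v/x]` is `u.subst [(x, v)]`. -/
def Tm.subst {F : Type} (σ : List (String × Tm F)) : Tm F → Tm F
  | .fn f us => .fn f (us.attach.map fun ⟨u, _⟩ => u.subst σ)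
  | .var x => (σ.lookup x).getD (.var x)
  | .app u v => .app (u.subst σ) (v.subst σ)
  | .pi x A B => .pi x (A.subst σ) (B.subst (σ.filter fun p => p.1 ≠ x))
  | .lam x u => .lam x (u.subst (σ.filter fun p => p.1 ≠ x))

/-- Smart application, eliminating obvious β-redexes:
`apply (lam (x. u)) v = u[v/x]` and `apply u v = app u v` otherwise. -/
def Tm.apply {F : Type} : Tm F → Tm F → Tm F
  | .lam x u, v => u.subst [(x, v)]
  | u, v => .app u v

/-- Free variables of a core term. -/
def Tm.fv {F : Type} : Tm F → Finset String
  | .fn _ us => (us.attach.map fun ⟨u, _⟩ => u.fv).foldr (· ∪ ·) ∅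
  | .var x => {x}
  | .app u v => u.fv ∪ v.fv
  | .pi x A B => A.fv ∪ B.fv.erase x
  | .lam x u => u.fv.erase x

/-- βη-convertibility of core terms: the least congruence containing β- and
η-conversion. -/
inductive Defeq {F : Type} : Tm F → Tm F → Prop
  | refl {u} : Defeq u u
  | symm {u v} : Defeq u v → Defeq v u
  | trans {u v w} : Defeq u v → Defeq v w → Defeq u w
  | beta {x u v} : Defeq (.app (.lam x u) v) (u.subst [(x, v)])
  | eta {x u} : x ∉ u.fv → Defeq (.lam x (.app u (.var x))) u
  | fnCongr {f us vs} : List.Forall₂ Defeq us vs → Defeq (.fn f us) (.fn f vs)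
  | appCongr {u u' v v'} : Defeq u u' → Defeq v v' → Defeq (.app u v) (.app u' v')
  | piCongr {x A A' B B'} : Defeq A A' → Defeq B B' →
      Defeq (.pi x A B) (.pi x A' B')
  | lamCongr {x u u'} : Defeq u u' → Defeq (.lam x u) (.lam x u')

/-- A telescope is a list of pairs `(x : A)` of a variable and its type. -/
abbrev Telescope (F : Type) := List (String × Tm F)

/-- `vars Δ` extracts the variable-reference terms from a telescope. -/
def varsOf {F : Type} : Telescope F → List (Tm F)
  | [] => []
  | (x, _A) :: Δ => Tm.var x :: varsOf Δ

/-- `genLam u Δ` generates an iterated lambda abstraction over `Δ`. -/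
def genLam {F : Type} (u : Tm F) : Telescope F → Tm F
  | [] => u
  | (x, _A) :: Δ => .lam x (genLam u Δ)

/-- A context assigns core types to local variables, and to every function
symbol a parameter telescope and a return type. -/
structure Ctx (F : Type) : Type where
  locals : List (String × Tm F)
  params : F → Telescope F
  retTy : F → Tm F

mutual
/-- Synthesis judgment `Γ ⊢ M ⇒ u : A`. -/
inductive Syn {F : Type} : Ctx F → Expr F → Tm F → Tm F → Prop
  | var {Γ : Ctx F} {x A} : (x, A) ∈ Γ.locals →
      Syn Γ (.lref x) (.var x) A
  | fn {Γ : Ctx F} {f} :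
      Syn Γ (.fref f) (genLam (.fn f (varsOf (Γ.params f))) (Γ.params f))
        (Γ.retTy f)
  | app {Γ : Ctx F} {M N u v x A B} :
      Syn Γ M u (.pi x A B) → Chk Γ N A v →
      Syn Γ (.capp M N) (u.apply v) (B.subst [(x, v)])

/-- Checking judgment `Γ ⊢ M : A ⇐ u`. -/
inductive Chk {F : Type} : Ctx F → Expr F → Tm F → Tm F → Prop
  | lam {Γ : Ctx F} {x y A B M u} :
      Chk { Γ with locals := (x, A) :: Γ.locals } M (B.subst [(y, .var x)]) u →
      Chk Γ (.clam x M) (.pi y A B) (.lam x u)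
  | conv {Γ : Ctx F} {M u A B} :
      Syn Γ M u A → Defeq A B → Chk Γ M B u
end

theorem mem_of_lookup_eq_some {F : Type} {x : String} {v : Tm F} :
    ∀ {σ : List (String × Tm F)}, σ.lookup x = some v → (x, v) ∈ σ
  | [], h => by simp at h
  | (y, w) :: σ, h => by
    rw [List.lookup_cons] at h
    split at h
    · simp_all
    · exact List.mem_cons_of_mem _ (mem_of_lookup_eq_some h)

/-- Exact application is stable under substitution by exactly-applied terms. The substitution is
generalized over because it is filtered when passing under a binder. -/
theorem ExactlyApplied.subst {F : Type} {arity : F → ℕ} {u : Tm F} (hu : ExactlyApplied arity u) :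
    ∀ {σ : List (String × Tm F)}, (∀ p ∈ σ, ExactlyApplied arity p.2) →
      ExactlyApplied arity (u.subst σ) := by
  induction hu with
  | fn hl _ ih =>
    intro σ hσ
    rw [Tm.subst]
    refine .fn (by simpa using hl) ?_
    intro w hw
    obtain ⟨⟨a, ha⟩, -, rfl⟩ := List.mem_map.1 hw
    exact ih a ha hσ
  | @var x =>
    intro σ hσ
    rw [Tm.subst]
    cases h : σ.lookup x with
    | none => exact .var
    | some v => exact hσ _ (mem_of_lookup_eq_some h)
  | app _ _ ihu ihv =>
    intro σ hσ
    rw [Tm.subst]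
    exact .app (ihu hσ) (ihv hσ)
  | pi _ _ ihA ihB =>
    intro σ hσ
    rw [Tm.subst]
    exact .pi (ihA hσ) (ihB fun p hp => hσ p (List.mem_filter.1 hp).1)
  | lam _ ih =>
    intro σ hσ
    rw [Tm.subst]
    exact .lam (ih fun p hp => hσ p (List.mem_filter.1 hp).1)

theorem ExactlyApplied.apply {F : Type} {arity : F → ℕ} {u v : Tm F}
    (hu : ExactlyApplied arity u) (hv : ExactlyApplied arity v) :
    ExactlyApplied arity (u.apply v) := by
  cases hu with
  | lam hu =>
    refine hu.subst ?_
    simpa using hv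
  | fn hl h => exact .app (.fn hl h) hv
  | var => exact .app .var hv
  | app h₁ h₂ => exact .app (.app h₁ h₂) hv
  | pi h₁ h₂ => exact .app (.pi h₁ h₂) hv

theorem length_varsOf {F : Type} : ∀ Δ : Telescope F, (varsOf Δ).length = Δ.length
  | [] => rfl
  | (_, _) :: Δ => congrArg (· + 1) (length_varsOf Δ)

theorem exactlyApplied_of_mem_varsOf {F : Type} (arity : F → ℕ) :
    ∀ (Δ : Telescope F), ∀ u ∈ varsOf Δ, ExactlyApplied arity u
  | [], _, h => by simp [varsOf] at h
  | (_, _) :: Δ, u, h => by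
    rcases List.mem_cons.1 h with rfl | h
    · exact .var
    · exact exactlyApplied_of_mem_varsOf arity Δ u h

theorem ExactlyApplied.genLam {F : Type} {arity : F → ℕ} {u : Tm F}
    (hu : ExactlyApplied arity u) : ∀ Δ : Telescope F, ExactlyApplied arity (genLam u Δ)
  | [] => hu
  | (_, _) :: Δ => .lam (hu.genLam Δ)

/-- The η-expansion of a function symbol, which is the output of the rule for function
references. -/
theorem ExactlyApplied.genLam_fn {F : Type} {arity : F → ℕ} {f : F} {Δ : Telescope F}
    (h : Δ.length = arity f) : ExactlyApplied arity (_root_.genLam (.fn f (varsOf Δ)) Δ) :=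
  .genLam (.fn ((length_varsOf Δ).trans h) (exactlyApplied_of_mem_varsOf arity Δ)) Δ

mutual

theorem Syn.exactlyApplied {F : Type} {arity : F → ℕ} {Γ : Ctx F} {M : Expr F} {u A : Tm F}
    (hlen : ∀ f : F, (Γ.params f).length = arity f) : Syn Γ M u A → ExactlyApplied arity u
  | .var _ => .var
  | .fn => .genLam_fn (hlen _)
  | .app hM hN => (Syn.exactlyApplied hlen hM).apply (Chk.exactlyApplied hlen hN)

/-- The type checked against leaves no trace in the output: `lam` is unannotated and the
conversion rule does not alter the term. -/
theorem Chk.exactlyApplied {F : Type} {arity : F → ℕ} {Γ : Ctx F} {M : Expr F} {A u : Tm F}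
    (hlen : ∀ f : F, (Γ.params f).length = arity f) : Chk Γ M A u → ExactlyApplied arity u
  | .lam hM => .lam (Chk.exactlyApplied (by exact hlen) hM)
  | .conv hM _ => Syn.exactlyApplied hlen hM

end

/-- Soundness of elaboration with respect to exact application: assuming all
types in `Γ`, all parameter telescopes (of length matching the arity) and
return types of the functions in `Γ` are exactly-applied, every synthesized
core term is exactly-applied, and every checked core term is exactly-applied
whenever the type it is checked against is. -/
theorem elaboration_exactlyApplied {F : Type} (arity : F → ℕ) (Γ : Ctx F)
    (hloc : ∀ p ∈ Γ.locals, ExactlyApplied arity p.2)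
    (hlen : ∀ f : F, (Γ.params f).length = arity f)
    (hpar : ∀ f : F, ∀ p ∈ Γ.params f, ExactlyApplied arity p.2)
    (hret : ∀ f : F, ExactlyApplied arity (Γ.retTy f)) :
    (∀ (M : Expr F) (u A : Tm F), Syn Γ M u A → ExactlyApplied arity u) ∧
    (∀ (M : Expr F) (A u : Tm F), Chk Γ M A u → ExactlyApplied arity A →
      ExactlyApplied arity u) := by
  exact ⟨fun _ _ _ h => h.exactlyApplied hlen, fun _ _ _ h _ => h.exactlyApplied hlen⟩
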